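/- Let S and A be (2,2) double forms on 4-dimensional Minkowski space with S_{cdab} = S_{abcd} (symmetric) and A_{cdab} = −A_{abcd} (antisymmetric) for all indices. Then for all a,b,c,d: ⋆⋆S_{abcd} + S_{abcd} = η_{ac} Ŝ_{bd} − η_{ad} Ŝ_{bc} + η_{bd} Ŝ_{ac} − η_{bc} Ŝ_{ad}, and ⋆⋆A_{abcd} − A_{abcd} = −(η_{ac} Â_{bd} − η_{ad} Â_{bc} + η_{bd} Â_{ac} − η_{bc} Â_{ad}), where ⋆⋆Y_{abcd} = (1/4) ε_{ab}{}^{pq} ε_{cd}{}^{rs} Y_{pqrs} denotes the double Hodge dual. -/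

import Mathlib

noncomputable section

/-- The Minkowski metric `η = diag(+1,−1,−1,−1)` on `ℝ⁴`.  Its inverse has the
same components, so `mink` is also used to raise indices. -/
def mink : Fin 4 → Fin 4 → ℝ :=
  fun a b => if a = b then (if a = 0 then 1 else -1) else 0

/-- The totally antisymmetric Levi-Civita tensor with all indices down and
`ε₀₁₂₃ = +1`, via the Vandermonde-product formula. -/
def lev : Fin 4 → Fin 4 → Fin 4 → Fin 4 → ℝ :=
  fun a b c d =>
    (((b : ℕ) : ℝ) - ((a : ℕ) : ℝ)) * (((c : ℕ) : ℝ) - ((a : ℕ) : ℝ)) *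
    (((d : ℕ) : ℝ) - ((a : ℕ) : ℝ)) * (((c : ℕ) : ℝ) - ((b : ℕ) : ℝ)) *
    (((d : ℕ) : ℝ) - ((b : ℕ) : ℝ)) * (((d : ℕ) : ℝ) - ((c : ℕ) : ℝ)) / 12

/-- `ε_{ab}{}^{pq}`: the Levi-Civita tensor with its last two indices raised
by the Minkowski metric. -/
def levUp (a b p q : Fin 4) : ℝ := ∑ r, ∑ s, mink p r * mink q s * lev a b r s

/-- The Kronecker delta on `Fin 4`. -/
def kd (a b : Fin 4) : ℝ := if a = b then 1 else 0

/-- Hodge dual `⋆F_{ab} = (1/2) ε_{ab}{}^{pq} F_{pq}` of a rank-2 tensor. -/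
def hodge2 (F : Fin 4 → Fin 4 → ℝ) (a b : Fin 4) : ℝ :=
  (1/2) * ∑ p, ∑ q, levUp a b p q * F p q

/-- Left Hodge dual `←⋆X_{abcd} = (1/2) ε_{ab}{}^{pq} X_{pqcd}`. -/
def leftD (X : Fin 4 → Fin 4 → Fin 4 → Fin 4 → ℝ) (a b c d : Fin 4) : ℝ :=
  (1/2) * ∑ p, ∑ q, levUp a b p q * X p q c d

/-- Right Hodge dual `→⋆X_{abcd} = (1/2) ε_{cd}{}^{pq} X_{abpq}`. -/
def rightD (X : Fin 4 → Fin 4 → Fin 4 → Fin 4 → ℝ) (a b c d : Fin 4) : ℝ :=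
  (1/2) * ∑ p, ∑ q, levUp c d p q * X a b p q

/-- Double Hodge dual `⋆⋆X_{abcd} = (1/4) ε_{ab}{}^{pq} ε_{cd}{}^{rs} X_{pqrs}`. -/
def dblD (X : Fin 4 → Fin 4 → Fin 4 → Fin 4 → ℝ) (a b c d : Fin 4) : ℝ :=
  (1/4) * ∑ p, ∑ q, ∑ r, ∑ s, levUp a b p q * levUp c d r s * X p q r s

/-- First trace `X_{ac} = η^{bd} X_{abcd}` of a (2,2) double form. -/
def tr1 (X : Fin 4 → Fin 4 → Fin 4 → Fin 4 → ℝ) (a c : Fin 4) : ℝ :=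
  ∑ b, ∑ d, mink b d * X a b c d

/-- Second trace `X = η^{ac} X_{ac}` of a (2,2) double form. -/
def tr2 (X : Fin 4 → Fin 4 → Fin 4 → Fin 4 → ℝ) : ℝ :=
  ∑ a, ∑ c, mink a c * tr1 X a c

/-- Hatted (trace-free) tensor `X̂_{ab} = X_{ab} − (1/4) X η_{ab}`. -/
def hatT (X : Fin 4 → Fin 4 → Fin 4 → Fin 4 → ℝ) (a b : Fin 4) : ℝ :=
  tr1 X a b - (1/4) * tr2 X * mink a b

/-- Rank-2 tensor with both indices raised by the Minkowski metric. -/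
def up2 (F : Fin 4 → Fin 4 → ℝ) (a b : Fin 4) : ℝ :=
  ∑ p, ∑ q, mink a p * mink b q * F p q

/-- Rank-4 tensor with all indices raised by the Minkowski metric. -/
def up4 (X : Fin 4 → Fin 4 → Fin 4 → Fin 4 → ℝ) (a b c d : Fin 4) : ℝ :=
  ∑ p, ∑ q, ∑ r, ∑ s, mink a p * mink b q * mink c r * mink d s * X p q r s

/-- The metric is diagonal, so raising the last two indices of `ε` only changes signs. -/
theorem levUp_eq (a b p q : Fin 4) : levUp a b p q = mink p p * mink q q * lev a b p q := by
  simp [levUp, mink, Finset.sum_ite_eq]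

/-- The components of the Hodge dual of an antisymmetric rank-2 tensor. -/
theorem hodge2_eq_of_antisymm (F : Fin 4 → Fin 4 → ℝ) (hF : ∀ p q, F p q = -F q p)
    (a b : Fin 4) :
    hodge2 F a b =
      !![0, F 2 3, -F 1 3, F 1 2;
        -F 2 3, 0, -F 0 3, F 0 2;
        F 1 3, F 0 3, 0, -F 0 1;
        -F 1 2, -F 0 2, F 0 1, 0] a b := by
  have h₁ := hF 1 0
  have h₂ := hF 2 0
  have h₃ := hF 3 0
  have h₄ := hF 2 1
  have h₅ := hF 3 1
  have h₆ := hF 3 2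
  fin_cases a <;> fin_cases b <;>
    norm_num [hodge2, levUp_eq, lev, mink, Fin.sum_univ_four,
      show (2 : Fin 4) ≠ 0 by decide, show (3 : Fin 4) ≠ 0 by decide] <;> linarith

/-- The double Hodge dual is the composition of the Hodge duals on the two index pairs. -/
theorem dblD_eq_hodge2_hodge2 (X : Fin 4 → Fin 4 → Fin 4 → Fin 4 → ℝ) (a b c d : Fin 4) :
    dblD X a b c d = hodge2 (fun p q => hodge2 (X p q) c d) a b := by
  simp only [dblD, hodge2, Finset.mul_sum]
  refine Finset.sum_congr rfl fun p _ => Finset.sum_congr rfl fun q _ =>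
    Finset.sum_congr rfl fun r _ => Finset.sum_congr rfl fun s _ => ?_
  ring

/-- The first trace written out in components. -/
theorem tr1_eq (X : Fin 4 → Fin 4 → Fin 4 → Fin 4 → ℝ) (a c : Fin 4) :
    tr1 X a c = X a 0 c 0 - X a 1 c 1 - X a 2 c 2 - X a 3 c 3 := by
  simp [tr1, mink, Fin.sum_univ_four]
  ring

/-- The second trace in terms of the first. -/
theorem tr2_eq (X : Fin 4 → Fin 4 → Fin 4 → Fin 4 → ℝ) :
    tr2 X = tr1 X 0 0 - tr1 X 1 1 - tr1 X 2 2 - tr1 X 3 3 := by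
  simp [tr2, mink, Fin.sum_univ_four]
  ring

/-- The Hodge dual of any rank-2 tensor is antisymmetric. -/
theorem hodge2_swap (F : Fin 4 → Fin 4 → ℝ) (a b : Fin 4) : hodge2 F a b = -hodge2 F b a := by
  have h (p q) : levUp a b p q = -levUp b a p q := by
    simp only [levUp_eq, lev]
    ring
  simp only [hodge2, h, neg_mul, Finset.sum_neg_distrib, mul_neg]

/-- A (2,2) double form vanishes if its components with ordered index pairs do. -/
theorem eq_zero_of_ordered_eq_zero (G : Fin 4 → Fin 4 → Fin 4 → Fin 4 → ℝ)
    (h₁ : ∀ a b c d, G a b c d = -G b a c d) (h₂ : ∀ a b c d, G a b c d = -G a b d c)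
    (h : ∀ a b c d, a < b → c < d → G a b c d = 0) (a b c d : Fin 4) : G a b c d = 0 := by
  have hcd (a b) (hab : a < b) (c d) : G a b c d = 0 := by
    rcases lt_trichotomy c d with hlt | rfl | hlt
    · exact h a b c d hab hlt
    · linarith [h₂ a b c c]
    · rw [h₂, h a b d c hab hlt, neg_zero]
  rcases lt_trichotomy a b with hlt | rfl | hlt
  · exact hcd a b hlt c d
  · linarith [h₁ a a c d]
  · rw [h₁, hcd b a hlt, neg_zero]

set_option maxHeartbeats 1000000 in
/-- Ruse–Lanczos identity for an arbitrary (2,2) double form. -/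
theorem dblD_add_swap (X : Fin 4 → Fin 4 → Fin 4 → Fin 4 → ℝ)
    (h₁ : ∀ a b c d, X a b c d = -X b a c d) (h₂ : ∀ a b c d, X a b c d = -X a b d c)
    (a b c d : Fin 4) :
    dblD X a b c d + X c d a b =
      mink a c * hatT X d b - mink a d * hatT X c b +
      mink b d * hatT X c a - mink b c * hatT X d a := by
  refine sub_eq_zero.mp (eq_zero_of_ordered_eq_zero (fun a b c d =>
    dblD X a b c d + X c d a b - (mink a c * hatT X d b - mink a d * hatT X c b +
      mink b d * hatT X c a - mink b c * hatT X d a)) ?_ ?_ ?_ a b c d)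
  · intro a b c d
    simp only [dblD_eq_hodge2_hodge2]
    rw [hodge2_swap _ a b, h₂ c d a b]
    ring
  · intro a b c d
    have hD : dblD X a b c d = -dblD X a b d c := by
      simp only [dblD_eq_hodge2_hodge2, hodge2_swap _ c d]
      simp only [hodge2, mul_neg, Finset.sum_neg_distrib]
    simp only [hD, h₁ c d a b]
    ring
  · intro a b c d hab hcd
    have hl (i c d) : X i i c d = 0 := by linarith [h₁ i i c d]
    have hr (a b i) : X a b i i = 0 := by linarith [h₂ a b i i]
    have hX (p q) (c d) : hodge2 (X p q) c d = -hodge2 (X q p) c d := by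
      simp only [hodge2, h₁ p q, mul_neg, Finset.sum_neg_distrib]
    simp only [dblD_eq_hodge2_hodge2]
    rw [hodge2_eq_of_antisymm _ fun p q => hX p q c d]
    simp only [hodge2_eq_of_antisymm _ (h₂ _ _), hatT, tr2_eq, tr1_eq, hl,
      h₁ 1 0, h₁ 2 0, h₁ 3 0, h₁ 2 1, h₁ 3 1, h₁ 3 2,
      h₂ _ _ 1 0, h₂ _ _ 2 0, h₂ _ _ 3 0, h₂ _ _ 2 1, h₂ _ _ 3 1, h₂ _ _ 3 2]
    fin_cases a <;> fin_cases b <;> first | exact absurd hab (by decide) | skip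
    all_goals
      fin_cases c <;> fin_cases d <;> first | exact absurd hcd (by decide) | skip
    all_goals
      simp [mink, hl, hr,
        h₁ 1 0, h₁ 2 0, h₁ 3 0, h₁ 2 1, h₁ 3 1, h₁ 3 2,
        h₂ _ _ 1 0, h₂ _ _ 2 0, h₂ _ _ 3 0, h₂ _ _ 2 1, h₂ _ _ 3 1, h₂ _ _ 3 2]
    all_goals ring

/-- The first trace of a double form with a pair-exchange sign has the same sign under
transposition. -/
theorem tr1_swap (X : Fin 4 → Fin 4 → Fin 4 → Fin 4 → ℝ) (σ : ℝ)
    (h : ∀ a b c d, X c d a b = σ * X a b c d) (a c : Fin 4) :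
    tr1 X c a = σ * tr1 X a c := by
  simp only [tr1_eq, h a _ c _]
  ring

/-- Ruse–Lanczos identity for the symmetric and antisymmetric parts of a
(2,2) double form. -/
theorem ruse_lanczos_sym_skew
    (S A : Fin 4 → Fin 4 → Fin 4 → Fin 4 → ℝ)
    (hS1 : ∀ a b c d, S a b c d = -S b a c d)
    (hS2 : ∀ a b c d, S a b c d = -S a b d c)
    (hSsym : ∀ a b c d, S c d a b = S a b c d)
    (hA1 : ∀ a b c d, A a b c d = -A b a c d)
    (hA2 : ∀ a b c d, A a b c d = -A a b d c)
    (hAskew : ∀ a b c d, A c d a b = -A a b c d) :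
    (∀ a b c d, dblD S a b c d + S a b c d =
      mink a c * hatT S b d - mink a d * hatT S b c +
      mink b d * hatT S a c - mink b c * hatT S a d) ∧
    (∀ a b c d, dblD A a b c d - A a b c d =
      -(mink a c * hatT A b d - mink a d * hatT A b c +
        mink b d * hatT A a c - mink b c * hatT A a d)) := by
  have mink_comm (a b : Fin 4) : mink a b = mink b a := by
    rcases eq_or_ne a b with rfl | h
    · rfl
    · simp [mink, h, h.symm]
  constructor
  · intro a b c d
    have ht := tr1_swap S 1 fun a b c d => by rw [hSsym a b c d, one_mul]
    have key := dblD_add_swap S hS1 hS2 a b c d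
    rw [hSsym a b c d] at key
    simp only [hatT, ht b d, ht b c, ht a c, ht a d, mink_comm d b,
      mink_comm c b, mink_comm c a, mink_comm d a] at key ⊢
    linarith
  · intro a b c d
    have ht := tr1_swap A (-1) fun a b c d => by rw [hAskew a b c d, neg_one_mul]
    have key := dblD_add_swap A hA1 hA2 a b c d
    rw [hAskew a b c d] at key
    have h0 : tr2 A = 0 := by
      rw [tr2_eq]
      linarith [ht 0 0, ht 1 1, ht 2 2, ht 3 3]
    simp only [hatT, ht b d, ht b c, ht a c, ht a d, h0] at key ⊢
    linarith
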